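/- For every real number q with 0 < q < 1, ∫_0^q ∏_{j=1}^∞ (1−t^j)^6 (1−t^{6j})^8 / (1−t^{3j})^{10} dt = q ∏_{j=1}^∞ (1−q^j)^3 (1−q^{6j})^9 / ((1−q^{2j})^3 (1−q^{3j})^9). Moreover this common value equals (3√2 − 4)/4 when q = e^{−2π/√6}, equals (√3 − 1)^3/16 when q = e^{−2π/√3}, and equals (√6 − 2)^3/8 when q = e^{−2π/√2}. -/

import Mathlib

open Real

/-- The integrand `∏_{j=1}^∞ (1−t^j)^6 (1−t^{6j})^8 / (1−t^{3j})^{10}`. -/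
noncomputable def U3 (t : ℝ) : ℝ :=
  ∏' j : ℕ, (1 - t ^ (j + 1)) ^ 6 * (1 - t ^ (6 * (j + 1))) ^ 8 / (1 - t ^ (3 * (j + 1))) ^ 10

/-- The antiderivative `q ∏_{j=1}^∞ (1−q^j)^3 (1−q^{6j})^9 / ((1−q^{2j})^3 (1−q^{3j})^9)`. -/
noncomputable def V3 (q : ℝ) : ℝ :=
  q * ∏' j : ℕ, (1 - q ^ (j + 1)) ^ 3 * (1 - q ^ (6 * (j + 1))) ^ 9 /
    ((1 - q ^ (2 * (j + 1))) ^ 3 * (1 - q ^ (3 * (j + 1))) ^ 9)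


noncomputable def Pf (p : ℝ) (n : ℕ) : ℝ := ∏ k ∈ Finset.range n, (1 - p ^ (k + 1))
noncomputable def Qf (p : ℝ) (k : ℤ) : ℝ := if 0 ≤ k then 1 / Pf p k.toNat else 0
noncomputable def ec (r x : ℝ) (j : ℤ) : ℝ := (-1) ^ j * r ^ (j ^ 2 - j) * x ^ j

lemma one_sub_pow_pos {p : ℝ} (h0 : 0 < p) (h1 : p < 1) (k : ℕ) : 0 < 1 - p ^ (k + 1) := by
  have := pow_lt_one₀ h0.le h1 (Nat.succ_ne_zero k)
  simpa using this

lemma Pf_pos {p : ℝ} (h0 : 0 < p) (h1 : p < 1) (n : ℕ) : 0 < Pf p n :=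
  Finset.prod_pos fun k _ => one_sub_pow_pos h0 h1 k

lemma Pf_le_one {p : ℝ} (h0 : 0 < p) (h1 : p < 1) (n : ℕ) : Pf p n ≤ 1 :=
  Finset.prod_le_one (fun k _ => (one_sub_pow_pos h0 h1 k).le)
    (fun k _ => by have := pow_pos h0 (k+1); linarith)

lemma Qf_rec {p : ℝ} (h0 : 0 < p) (h1 : p < 1) (k : ℤ) :
    Qf p (k - 1) = (1 - p ^ k) * Qf p k := by
  rcases lt_trichotomy k 0 with h | h | h
  · simp [Qf, not_le.2 h, show ¬ (1 ≤ k) by omega]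
  · subst h; simp [Qf]
  · obtain ⟨n, rfl⟩ : ∃ n : ℕ, k = n + 1 := ⟨(k-1).toNat, by omega⟩
    have e1 : ((n : ℤ) + 1).toNat = n + 1 := by omega
    have := Pf_pos h0 h1 n
    have h2 := one_sub_pow_pos h0 h1 n
    have e2 : p ^ ((n : ℤ) + 1) = p ^ (n + 1) := by exact_mod_cast zpow_natCast p (n + 1)
    have h3 : Pf p (n + 1) = Pf p n * (1 - p ^ (n + 1)) := by simp [Pf, Finset.prod_range_succ]
    simp only [Qf, add_sub_cancel_right, Int.toNat_natCast, e1, e2, h3]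
    rw [if_pos (by omega), if_pos (by omega)]
    field_simp

lemma ec_succ {r x : ℝ} (hr : 0 < r) (hx : 0 < x) (j : ℤ) :
    ec r x (j + 1) = - (r ^ 2) ^ j * x * ec r x j := by
  have : r ^ ((j + 1) ^ 2 - (j + 1)) = r ^ (j ^ 2 - j) * (r ^ 2) ^ j := by
    rw [show (r ^ 2) ^ j = r ^ (2 * j) by rw [zpow_mul]; norm_cast, ← zpow_add₀ hr.ne']
    congr 1; ring
  unfold ec
  rw [this, zpow_add₀ (by norm_num), zpow_add₀ hx.ne']
  simp; ring

lemma jtp_fin {r x : ℝ} (h0 : 0 < r) (h1 : r < 1) (hx : 0 < x) (N : ℕ) :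
    HasSum (fun j : ℤ => Pf (r ^ 2) (2 * N) * Qf (r ^ 2) (N - j) * Qf (r ^ 2) (N + j) * ec r x j)
      (∏ k ∈ Finset.range N, ((1 - x * (r ^ 2) ^ k) * (1 - (r ^ 2) ^ (k + 1) / x))) := by
  set p := r ^ 2 with hp
  have p0 : 0 < p := by positivity
  have p1 : p < 1 := by rw [hp]; nlinarith
  induction N with
  | zero =>
    convert hasSum_single (0 : ℤ) ?_ using 1
    · simp [Pf, Qf, ec]
    · intro j hj
      rcases lt_or_gt_of_ne hj with h | h
      · simp [Qf, not_le.2 h]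
      · simp [Qf, h]
  | succ N ih =>
    rw [Finset.prod_range_succ]
    set S := ∏ k ∈ Finset.range N, ((1 - x * p ^ k) * (1 - p ^ (k + 1) / x))
    have s1 := (Equiv.subRight (1:ℤ)).hasSum_iff.2 ih
    have s2 := (Equiv.addRight (1:ℤ)).hasSum_iff.2 ih
    have s3 := ((ih.mul_left (1 + p ^ (2 * N + 1))).sub (s1.mul_left (x * p ^ N))).sub
      (s2.mul_left (p ^ (N + 1) / x))
    have hval : S * ((1 - x * p ^ N) * (1 - p ^ (N + 1) / x)) = (1 + p ^ (2 * N + 1)) * S -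
        x * p ^ N * S - p ^ (N + 1) / x * S := by
      field_simp
      ring
    rw [hval]
    refine (congrArg (fun f : ℤ → ℝ => HasSum f _) (funext fun j => ?_)).mpr s3
    · show _ = _
      simp only [Function.comp, Equiv.subRight_apply, Equiv.coe_addRight]
      push_cast
      have a1 := Qf_rec p0 p1 (N + 1 - j)
      have a2 := Qf_rec p0 p1 (N - j)
      have b1 := Qf_rec p0 p1 (N + 1 + j)
      have b2 := Qf_rec p0 p1 (N + j)
      rw [show (N : ℤ) + 1 - j - 1 = N - j by ring] at a1
      rw [show (N : ℤ) + 1 + j - 1 = N + j by ring] at b1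
      rw [show (N : ℤ) - (j - 1) = N + 1 - j by ring, show (N : ℤ) + (j - 1) = N + j - 1 by ring,
        show (N : ℤ) - (j + 1) = N - j - 1 by ring, show (N : ℤ) + (j + 1) = N + 1 + j by ring,
        a2, b2, a1, b1]
      have e1 := ec_succ h0 hx j
      have e2 := ec_succ h0 hx (j - 1)
      rw [sub_add_cancel] at e2
      rw [← hp] at e1 e2
      have z1 : p ^ (N + 1 - j : ℤ) = p ^ N * p / p ^ j := by
        rw [zpow_sub₀ p0.ne', zpow_add₀ p0.ne']; simp
      have z2 : p ^ (N - j : ℤ) = p ^ N / p ^ j := by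
        rw [zpow_sub₀ p0.ne']; simp
      have z3 : p ^ (N + 1 + j : ℤ) = p ^ N * p * p ^ j := by
        rw [zpow_add₀ p0.ne', zpow_add₀ p0.ne']; simp
      have z4 : p ^ (N + j : ℤ) = p ^ N * p ^ j := by
        rw [zpow_add₀ p0.ne']; simp
      have z5 : p ^ (j - 1 : ℤ) = p ^ j / p := by
        rw [zpow_sub₀ p0.ne']; simp
      have hj : 0 < p ^ j := zpow_pos p0 j
      have e3 : ec r x (j - 1) = - p / p ^ j / x * ec r x j := by
        rw [e2, z5]; field_simp
      rw [e1, e3, z1, z2, z3, z4]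
      have hP : Pf p (2 * (N + 1)) = Pf p (2 * N) * (1 - p ^ (2 * N + 1)) * (1 - p ^ (2 * N + 2)) := by
        rw [show 2 * (N + 1) = 2 * N + 1 + 1 by ring, Pf, Finset.prod_range_succ, Finset.prod_range_succ]; rfl
      rw [hP]
      field_simp
      ring

open Filter Topology in
lemma mult_one_sub {c : ℕ → ℝ} (hc : Summable c) : Multipliable (fun n => 1 - c n) := by
  simpa [sub_eq_add_neg] using Real.multipliable_one_add_of_summable hc.neg

lemma tprod_one_sub_pos {c : ℕ → ℝ} (hc : Summable c) (h : ∀ n, c n < 1) :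
    0 < ∏' n, (1 - c n) := by
  rw [← Real.rexp_tsum_eq_tprod]
  · exact Real.exp_pos _
  · intro n; linarith [h n]
  · simpa [sub_eq_add_neg] using Real.summable_log_one_add_of_summable hc.neg

noncomputable def EE (q : ℝ) : ℝ := ∏' n : ℕ, (1 - q ^ (n + 1))

lemma summable_pow_succ {q : ℝ} (h0 : 0 < q) (h1 : q < 1) : Summable (fun n : ℕ => q ^ (n + 1)) :=
  (summable_nat_add_iff 1).2 (summable_geometric_of_lt_one h0.le h1)

lemma EE_pos {q : ℝ} (h0 : 0 < q) (h1 : q < 1) : 0 < EE q :=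
  tprod_one_sub_pos (summable_pow_succ h0 h1) fun n => by linarith [one_sub_pow_pos h0 h1 n]

open Filter Topology in
lemma Pf_tendsto {q : ℝ} (h0 : 0 < q) (h1 : q < 1) : Tendsto (Pf q) atTop (𝓝 (EE q)) :=
  (mult_one_sub (summable_pow_succ h0 h1)).hasProd.tendsto_prod_nat

lemma Pf_anti {q : ℝ} (h0 : 0 < q) (h1 : q < 1) : Antitone (Pf q) := by
  apply antitone_nat_of_succ_le
  intro n
  have h3 : Pf q (n + 1) = Pf q n * (1 - q ^ (n + 1)) := by simp [Pf, Finset.prod_range_succ]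
  rw [h3]
  have := Pf_pos h0 h1 n
  have := pow_pos h0 (n + 1)
  nlinarith

lemma EE_le_Pf {q : ℝ} (h0 : 0 < q) (h1 : q < 1) (n : ℕ) : EE q ≤ Pf q n :=
  (Pf_anti h0 h1).le_of_tendsto (Pf_tendsto h0 h1) n

lemma EE_le_one {q : ℝ} (h0 : 0 < q) (h1 : q < 1) : EE q ≤ 1 :=
  (EE_le_Pf h0 h1 0).trans (by simp [Pf])

lemma Qf_nonneg {q : ℝ} (h0 : 0 < q) (h1 : q < 1) (k : ℤ) : 0 ≤ Qf q k := by
  unfold Qf; split_ifs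
  · have := Pf_pos h0 h1 k.toNat; positivity
  · exact le_rfl

lemma Qf_le {q : ℝ} (h0 : 0 < q) (h1 : q < 1) (k : ℤ) : Qf q k ≤ 1 / EE q := by
  unfold Qf; split_ifs
  · exact one_div_le_one_div_of_le (EE_pos h0 h1) (EE_le_Pf h0 h1 _)
  · have := EE_pos h0 h1; positivity

open Filter Topology in
lemma Qf_tendsto {q : ℝ} (h0 : 0 < q) (h1 : q < 1) (j : ℤ) :
    Tendsto (fun N : ℕ => Qf q (N + j)) atTop (𝓝 (1 / EE q)) := by
  have h : Tendsto (fun N : ℕ => ((N : ℤ) + j).toNat) atTop atTop := by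
    apply tendsto_atTop.2
    intro b
    filter_upwards [eventually_ge_atTop (b + j.natAbs)] with N hN
    omega
  have := ((Pf_tendsto h0 h1).comp h).inv₀ (EE_pos h0 h1).ne'
  rw [one_div]
  refine this.congr' ?_
  filter_upwards [eventually_ge_atTop (j.natAbs)] with N hN
  simp only [Qf, Function.comp]
  rw [if_pos (by omega), one_div]

lemma summable_gauss {r x : ℝ} (h0 : 0 < r) (h1 : r < 1) (hx : 0 < x) (a : ℤ) (ha : 0 < a) (b : ℤ) :
    Summable (fun j : ℤ => r ^ (a * j ^ 2 + b * j) * x ^ j) := by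
  have hl : Real.log r < 0 := Real.log_neg h0 h1
  have ha' : (0:ℝ) < a := by exact_mod_cast ha
  set c := b * Real.log r + Real.log x with hc
  have := summable_pow_mul_jacobiTheta₂_term_bound (|c| / (2 * π))
    (T := - (a * Real.log r) / π) (by have := Real.pi_pos; apply div_pos _ this; nlinarith) 0
  refine this.of_nonneg_of_le (fun j => by positivity) (fun j => ?_)
  have e1 : r ^ (a * j ^ 2 + b * j) = Real.exp (Real.log r * (a * j ^ 2 + b * j)) := by
    rw [← Real.rpow_intCast, Real.rpow_def_of_pos h0]; push_cast; rfl
  have e2 : x ^ j = Real.exp (Real.log x * j) := by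
    rw [← Real.rpow_intCast, Real.rpow_def_of_pos hx]
  rw [e1, e2, ← Real.exp_add, pow_zero, one_mul]
  apply Real.exp_le_exp.2
  have : -π * (-(a * Real.log r) / π * (j:ℝ) ^ 2 - 2 * (|c| / (2 * π)) * |(j:ℝ)|) =
    a * Real.log r * j ^ 2 + |c| * |(j:ℝ)| := by
    field_simp
    ring
  push_cast at this ⊢
  rw [this, ← abs_mul]
  have := le_abs_self (c * (j:ℝ))
  rw [hc] at this ⊢
  linarith

noncomputable def th (p x : ℝ) : ℝ := ∏' n : ℕ, ((1 - x * p ^ n) * (1 - p ^ (n + 1) / x))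

lemma mult_th1 {p : ℝ} (h0 : 0 < p) (h1 : p < 1) (x : ℝ) :
    Multipliable (fun n : ℕ => 1 - x * p ^ n) :=
  mult_one_sub ((summable_geometric_of_lt_one h0.le h1).mul_left x)

lemma mult_th2 {p : ℝ} (h0 : 0 < p) (h1 : p < 1) (x : ℝ) :
    Multipliable (fun n : ℕ => 1 - p ^ (n + 1) / x) :=
  mult_one_sub ((summable_pow_succ h0 h1).div_const x)

lemma ec_summable {r x : ℝ} (h0 : 0 < r) (h1 : r < 1) (hx : 0 < x) : Summable (fun j => |ec r x j|) := by
  refine (summable_gauss h0 h1 hx 1 one_pos (-1)).congr (fun j => ?_)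
  rw [ec, abs_mul, abs_mul, abs_zpow, abs_neg, abs_one, one_zpow, one_mul,
    abs_of_pos (zpow_pos h0 _), abs_of_pos (zpow_pos hx _)]
  congr 2; ring

open Filter Topology in
lemma jtp {r x : ℝ} (h0 : 0 < r) (h1 : r < 1) (hx : 0 < x) :
    ∑' j, ec r x j = EE (r ^ 2) * th (r ^ 2) x := by
  have p0 : 0 < r ^ 2 := by positivity
  have p1 : r ^ 2 < 1 := by nlinarith
  have hE := EE_pos p0 p1
  have t1 : Tendsto (fun N : ℕ => ∑' j : ℤ, Pf (r ^ 2) (2 * N) * Qf (r ^ 2) (N - j) *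
      Qf (r ^ 2) (N + j) * ec r x j) atTop (𝓝 (∑' j, (1 / EE (r ^ 2)) * ec r x j)) := by
    apply tendsto_tsum_of_dominated_convergence
      (bound := fun j => (1 / EE (r ^ 2)) * (1 / EE (r ^ 2)) * |ec r x j|)
    · exact (ec_summable h0 h1 hx).mul_left _
    · intro j
      have h2 : Tendsto (fun N : ℕ => Pf (r ^ 2) (2 * N)) atTop (𝓝 (EE (r ^ 2))) :=
        (Pf_tendsto p0 p1).comp (tendsto_id.const_mul_atTop' (by norm_num))
      have h3 := ((h2.mul (Qf_tendsto p0 p1 (-j))).mul (Qf_tendsto p0 p1 j)).mul_const (ec r x j)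
      rw [mul_one_div_cancel hE.ne', one_mul] at h3
      simpa [sub_eq_add_neg] using h3
    · refine Eventually.of_forall fun N j => ?_
      rw [Real.norm_eq_abs, abs_mul, abs_mul, abs_mul, abs_of_pos (Pf_pos p0 p1 _),
        abs_of_nonneg (Qf_nonneg p0 p1 _), abs_of_nonneg (Qf_nonneg p0 p1 _)]
      gcongr
      · exact Qf_nonneg p0 p1 _
      · calc _ ≤ 1 * Qf (r ^ 2) (N - j) := by
              gcongr
              · exact Qf_nonneg p0 p1 _
              · exact Pf_le_one p0 p1 _
          _ ≤ _ := by rw [one_mul]; exact Qf_le p0 p1 _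
      · exact Qf_le p0 p1 _
  simp_rw [(jtp_fin h0 h1 hx _).tsum_eq] at t1
  have t2 : Tendsto (fun N : ℕ => ∏ k ∈ Finset.range N, ((1 - x * (r ^ 2) ^ k) * (1 - (r ^ 2) ^ (k + 1) / x)))
      atTop (𝓝 (th (r ^ 2) x)) :=
    ((mult_th1 p0 p1 x).mul (mult_th2 p0 p1 x)).hasProd.tendsto_prod_nat
  have := tendsto_nhds_unique t1 t2
  rw [tsum_mul_left] at this
  rw [← this]
  field_simp

noncomputable def gH (r x : ℝ) : ℝ := ∑' j : ℤ, r ^ (2 * j ^ 2) * x ^ (2 * j)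
noncomputable def gG (r x : ℝ) : ℝ := ∑' j : ℤ, r ^ (2 * j ^ 2 + 2 * j) * x ^ (2 * j + 1)

lemma zpow_two_mul' (x : ℝ) (j : ℤ) : x ^ (2 * j) = (x ^ 2) ^ j := by
  rw [zpow_mul]; norm_cast

lemma summable_H {r x : ℝ} (h0 : 0 < r) (h1 : r < 1) (hx : 0 < x) :
    Summable (fun j : ℤ => r ^ (2 * j ^ 2) * x ^ (2 * j)) := by
  refine (summable_gauss h0 h1 (x := x ^ 2) (by positivity) 2 (by norm_num) 0).congr (fun j => ?_)
  rw [zpow_two_mul' x, zero_mul, add_zero]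

lemma summable_G {r x : ℝ} (h0 : 0 < r) (h1 : r < 1) (hx : 0 < x) :
    Summable (fun j : ℤ => r ^ (2 * j ^ 2 + 2 * j) * x ^ (2 * j + 1)) := by
  refine ((summable_gauss h0 h1 (x := x ^ 2) (by positivity) 2 (by norm_num) 2).mul_right x).congr
    (fun j => ?_)
  rw [zpow_add₀ hx.ne', zpow_two_mul', zpow_one, mul_assoc]

lemma hasSum_G0 {r x : ℝ} (h0 : 0 < r) (h1 : r < 1) (hx : 0 < x) :
    HasSum (fun j : ℤ => r ^ (2 * j ^ 2 - 2 * j) * x ^ (2 * j)) (x * gG r x) := by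
  have := ((summable_G h0 h1 hx).hasSum.mul_left x)
  have := (Equiv.subRight (1:ℤ)).hasSum_iff.2 this
  refine (congrArg (fun f : ℤ → ℝ => HasSum f _) (funext fun j => ?_)).mpr this
  simp only [Function.comp, Equiv.subRight_apply]
  rw [show 2 * (j - 1) ^ 2 + 2 * (j - 1) = 2 * j ^ 2 - 2 * j by ring,
    show 2 * (j - 1) + 1 = 2 * j - 1 by ring, zpow_sub₀ hx.ne' (2 * j) 1, zpow_one]
  field_simp

def parEquiv : (ℤ × ℤ) ⊕ (ℤ × ℤ) ≃ ℤ × ℤ where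
  toFun s := Sum.elim (fun z => (z.1 + z.2, z.1 - z.2)) (fun z => (z.1 + z.2 + 1, z.1 - z.2)) s
  invFun z := if (z.1 + z.2) % 2 = 0 then Sum.inl ((z.1 + z.2) / 2, (z.1 - z.2) / 2)
    else Sum.inr ((z.1 + z.2 - 1) / 2, (z.1 - z.2 - 1) / 2)
  left_inv := by
    rintro (⟨i, j⟩ | ⟨i, j⟩)
    · refine (if_pos (show (i + j + (i - j)) % 2 = 0 by omega)).trans ?_
      exact congrArg Sum.inl (Prod.ext (show (i + j + (i - j)) / 2 = i by omega)
        (show (i + j - (i - j)) / 2 = j by omega))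
    · refine (if_neg (show ¬ (i + j + 1 + (i - j)) % 2 = 0 by omega)).trans ?_
      exact congrArg Sum.inr (Prod.ext (show (i + j + 1 + (i - j) - 1) / 2 = i by omega)
        (show (i + j + 1 - (i - j) - 1) / 2 = j by omega))
  right_inv := by
    rintro ⟨m, n⟩
    dsimp only
    split_ifs
    · simp only [Sum.elim_inl]; congr 1 <;> omega
    · simp only [Sum.elim_inr]; congr 1 <;> omega

noncomputable def TH (r x : ℝ) : ℝ := ∑' j, ec r x j

lemma ec_even {r x y : ℝ} (h0 : 0 < r) (hx : 0 < x) (hy : 0 < y) (i j : ℤ) :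
    ec r (x * y) (i + j) * ec r (x / y) (i - j) =
      (r ^ (2 * i ^ 2 - 2 * i) * x ^ (2 * i)) * (r ^ (2 * j ^ 2) * y ^ (2 * j)) := by
  unfold ec
  have e1 : ((-1 : ℝ)) ^ (i + j) * (-1) ^ (i - j) = 1 := by
    rw [← zpow_add₀ (by norm_num)]
    exact Even.neg_one_zpow ⟨i, by ring⟩
  have e2 : r ^ ((i + j) ^ 2 - (i + j)) * r ^ ((i - j) ^ 2 - (i - j)) =
      r ^ (2 * i ^ 2 - 2 * i) * r ^ (2 * j ^ 2) := by
    rw [← zpow_add₀ h0.ne', ← zpow_add₀ h0.ne']; congr 1; ring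
  have e3 : (x * y) ^ (i + j) * (x / y) ^ (i - j) = x ^ (2 * i) * y ^ (2 * j) := by
    rw [mul_zpow, div_zpow, show 2 * i = (i + j) + (i - j) by ring,
      show 2 * j = (i + j) - (i - j) by ring, zpow_add₀ hx.ne' (i + j), zpow_sub₀ hy.ne' (i + j)]
    field_simp
  calc _ = (((-1 : ℝ)) ^ (i + j) * (-1) ^ (i - j)) *
      (r ^ ((i + j) ^ 2 - (i + j)) * r ^ ((i - j) ^ 2 - (i - j))) *
      ((x * y) ^ (i + j) * (x / y) ^ (i - j)) := by ring
    _ = _ := by rw [e1, e2, e3]; ring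

lemma ec_odd {r x y : ℝ} (h0 : 0 < r) (hx : 0 < x) (hy : 0 < y) (i j : ℤ) :
    ec r (x * y) (i + j + 1) * ec r (x / y) (i - j) =
      (- x * (r ^ (2 * i ^ 2) * x ^ (2 * i))) * (r ^ (2 * j ^ 2 + 2 * j) * y ^ (2 * j + 1)) := by
  unfold ec
  have e1 : ((-1 : ℝ)) ^ (i + j + 1) * (-1) ^ (i - j) = -1 := by
    rw [← zpow_add₀ (by norm_num)]
    exact Odd.neg_one_zpow ⟨i, by ring⟩
  have e2 : r ^ ((i + j + 1) ^ 2 - (i + j + 1)) * r ^ ((i - j) ^ 2 - (i - j)) =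
      r ^ (2 * i ^ 2) * r ^ (2 * j ^ 2 + 2 * j) := by
    rw [← zpow_add₀ h0.ne', ← zpow_add₀ h0.ne']; congr 1; ring
  have e3 : (x * y) ^ (i + j + 1) * (x / y) ^ (i - j) = x * x ^ (2 * i) * y ^ (2 * j + 1) := by
    rw [mul_zpow, div_zpow, show 2 * j + 1 = (i + j + 1) - (i - j) by ring, zpow_sub₀ hy.ne' (i + j + 1)]
    have : x * x ^ (2 * i) = x ^ (i + j + 1) * x ^ (i - j) := by
      rw [← zpow_add₀ hx.ne', ← zpow_one_add₀ hx.ne']; congr 1; ring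
    rw [this]
    field_simp
  calc _ = (((-1 : ℝ)) ^ (i + j + 1) * (-1) ^ (i - j)) *
      (r ^ ((i + j + 1) ^ 2 - (i + j + 1)) * r ^ ((i - j) ^ 2 - (i - j))) *
      ((x * y) ^ (i + j + 1) * (x / y) ^ (i - j)) := by ring
    _ = _ := by rw [e1, e2, e3]; ring

lemma hasSum_mul_pos {f g : ℤ → ℝ} {a b : ℝ} (hf : HasSum f a) (hg : HasSum g b) :
    HasSum (fun z : ℤ × ℤ => f z.1 * g z.2) (a * b) :=
  hf.mul hg (summable_mul_of_summable_norm hf.summable.abs hg.summable.abs)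

lemma TH_mul {r x y : ℝ} (h0 : 0 < r) (h1 : r < 1) (hx : 0 < x) (hy : 0 < y) :
    TH r (x * y) * TH r (x / y) = x * (gG r x * gH r y - gH r x * gG r y) := by
  have a1 := (ec_summable h0 h1 (mul_pos hx hy)).of_abs.hasSum
  have a2 := (ec_summable h0 h1 (div_pos hx hy)).of_abs.hasSum
  have A := parEquiv.hasSum_iff.2 (hasSum_mul_pos a1 a2)
  have B1 := hasSum_mul_pos (hasSum_G0 h0 h1 hx) (summable_H h0 h1 hy).hasSum
  have B2 := hasSum_mul_pos ((summable_H h0 h1 hx).hasSum.mul_left (-x)) (summable_G h0 h1 hy).hasSum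
  have B : HasSum ((fun z : ℤ × ℤ => ec r (x * y) z.1 * ec r (x / y) z.2) ∘ parEquiv) _ :=
    HasSum.sum (f := (fun z : ℤ × ℤ => ec r (x * y) z.1 * ec r (x / y) z.2) ∘ parEquiv)
    (a := (x * gG r x) * gH r y) (b := -x * gH r x * gG r y) (by
      refine (congrArg (fun f : ℤ × ℤ → ℝ => HasSum f _) (funext fun z => ?_)).mpr B1
      exact ec_even h0 hx hy z.1 z.2) (by
      refine (congrArg (fun f : ℤ × ℤ → ℝ => HasSum f _) (funext fun z => ?_)).mpr B2
      exact ec_odd h0 hx hy z.1 z.2)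
  have := A.unique B
  rw [TH, TH, this]; ring

/-- normalized product -/
noncomputable def tD (p x y : ℝ) : ℝ := th p (x * y) * th p (x / y) / x

lemma weier {r x y u : ℝ} (h0 : 0 < r) (h1 : r < 1) (hx : 0 < x) (hy : 0 < y) (hu : 0 < u) :
    tD (r ^ 2) x y * tD (r ^ 2) u 1 + tD (r ^ 2) x 1 * tD (r ^ 2) y u =
      tD (r ^ 2) x u * tD (r ^ 2) y 1 := by
  have p0 : 0 < r ^ 2 := by positivity
  have p1 : r ^ 2 < 1 := by nlinarith
  have hE := EE_pos p0 p1
  have key : ∀ a b : ℝ, 0 < a → 0 < b → tD (r ^ 2) a b =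
      (gG r a * gH r b - gH r a * gG r b) / EE (r ^ 2) ^ 2 := by
    intro a b ha hb
    have h := TH_mul h0 h1 ha hb
    rw [TH, TH, jtp h0 h1 (mul_pos ha hb), jtp h0 h1 (div_pos ha hb)] at h
    rw [tD, div_eq_div_iff ha.ne' (by positivity)]
    linarith
  rw [key x y hx hy, key u 1 hu one_pos, key x 1 hx one_pos, key y u hy hu, key x u hx hu,
    key y 1 hy one_pos]
  ring

lemma prod_range_mul' (f : ℕ → ℝ) (k N : ℕ) :
    ∏ n ∈ Finset.range (k * N), f n = ∏ n ∈ Finset.range N, ∏ i ∈ Finset.range k, f (k * n + i) := by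
  induction N with
  | zero => simp
  | succ N ih => rw [Nat.mul_succ, Finset.prod_range_add, ih, Finset.prod_range_succ]

lemma sum_range_mul' (f : ℕ → ℝ) (k N : ℕ) :
    ∑ n ∈ Finset.range (k * N), f n = ∑ n ∈ Finset.range N, ∑ i ∈ Finset.range k, f (k * n + i) := by
  induction N with
  | zero => simp
  | succ N ih => rw [Nat.mul_succ, Finset.sum_range_add, ih, Finset.sum_range_succ]

open Filter Topology in
lemma tprod_regroup {f : ℕ → ℝ} {k : ℕ} (hk : 0 < k) (hf : Multipliable f)
    (hg : ∀ i, Multipliable (fun n => f (k * n + i))) :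
    ∏' n, f n = ∏ i ∈ Finset.range k, ∏' n, f (k * n + i) := by
  have h1 := hf.hasProd.tendsto_prod_nat.comp
    (tendsto_id.const_mul_atTop' hk : Tendsto (fun N : ℕ => k * N) atTop atTop)
  have h2 : Tendsto (fun N => ∏ i ∈ Finset.range k, ∏ n ∈ Finset.range N, f (k * n + i)) atTop
      (𝓝 (∏ i ∈ Finset.range k, ∏' n, f (k * n + i))) :=
    tendsto_finsetProd _ fun i _ => (hg i).hasProd.tendsto_prod_nat
  refine tendsto_nhds_unique h1 (h2.congr fun N => ?_)
  simp only [Function.comp]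
  rw [prod_range_mul', Finset.prod_comm]

open Filter Topology in
lemma tsum_regroup {f : ℕ → ℝ} {k : ℕ} (hk : 0 < k) (hf : Summable f)
    (hg : ∀ i, Summable (fun n => f (k * n + i))) :
    ∑' n, f n = ∑ i ∈ Finset.range k, ∑' n, f (k * n + i) := by
  have h1 := hf.hasSum.tendsto_sum_nat.comp
    (tendsto_id.const_mul_atTop' hk : Tendsto (fun N : ℕ => k * N) atTop atTop)
  have h2 : Tendsto (fun N => ∑ i ∈ Finset.range k, ∑ n ∈ Finset.range N, f (k * n + i)) atTop
      (𝓝 (∑ i ∈ Finset.range k, ∑' n, f (k * n + i))) :=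
    tendsto_finsetSum _ fun i _ => (hg i).hasSum.tendsto_sum_nat
  refine tendsto_nhds_unique h1 (h2.congr fun N => ?_)
  simp only [Function.comp]
  rw [sum_range_mul', Finset.sum_comm]

noncomputable def aa (q : ℝ) (i : ℕ) : ℝ := ∏' n : ℕ, (1 - q ^ (6 * n + i))
noncomputable def kk (a : ℝ) : ℝ := a / (1 - a) ^ 2
noncomputable def SS (q : ℝ) (i : ℕ) : ℝ := ∑' n : ℕ, kk (q ^ (6 * n + i))
noncomputable def WW (q e : ℝ) (i : ℕ) : ℝ := ∏' n : ℕ, (1 - e * kk (q ^ (6 * n + i)))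
noncomputable def MM (q : ℝ) : ℝ := ∑' n : ℕ, kk (q ^ (n + 1))

lemma sum6 {q : ℝ} (h0 : 0 < q) (h1 : q < 1) (i : ℕ) : Summable (fun n : ℕ => q ^ (6 * n + i)) := by
  have := (summable_geometric_of_lt_one (by positivity) (pow_lt_one₀ h0.le h1 (n := 6) (by norm_num))).mul_right (q ^ i)
  refine this.congr fun n => ?_
  rw [pow_add, pow_mul]

lemma mult6 {q : ℝ} (h0 : 0 < q) (h1 : q < 1) (i : ℕ) : Multipliable (fun n : ℕ => 1 - q ^ (6 * n + i)) :=
  mult_one_sub (sum6 h0 h1 i)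

lemma aa_pos {q : ℝ} (h0 : 0 < q) (h1 : q < 1) (i : ℕ) (hi : 0 < i) : 0 < aa q i :=
  tprod_one_sub_pos (sum6 h0 h1 i) fun n => pow_lt_one₀ h0.le h1 (by omega)

lemma kk_nonneg {a : ℝ} (h : 0 ≤ a) : 0 ≤ kk a := by unfold kk; positivity

lemma kk_pow_le {q : ℝ} (h0 : 0 < q) (h1 : q < 1) {m : ℕ} (hm : 0 < m) :
    kk (q ^ m) ≤ q ^ m * (1 / (1 - q) ^ 2) := by
  unfold kk
  rw [div_eq_mul_one_div]
  have : q ^ m ≤ q := by simpa using pow_le_pow_of_le_one h0.le h1.le hm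
  have h2 : 0 < 1 - q := by linarith
  gcongr

lemma kk6 {q : ℝ} (h0 : 0 < q) (h1 : q < 1) (i : ℕ) (hi : 0 < i) :
    Summable (fun n : ℕ => kk (q ^ (6 * n + i))) :=
  ((sum6 h0 h1 i).mul_right _).of_nonneg_of_le (fun n => kk_nonneg (by positivity))
    fun n => kk_pow_le h0 h1 (by omega)

lemma kk1 {q : ℝ} (h0 : 0 < q) (h1 : q < 1) :
    Summable (fun n : ℕ => kk (q ^ (n + 1))) :=
  ((summable_pow_succ h0 h1).mul_right _).of_nonneg_of_le (fun n => kk_nonneg (by positivity))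
    fun n => kk_pow_le h0 h1 (by omega)

lemma EE_split {q : ℝ} (h0 : 0 < q) (h1 : q < 1) {d k : ℕ} (hd : 0 < d) (hk : d * k = 6) :
    EE (q ^ d) = ∏ i ∈ Finset.range k, aa q (d * (i + 1)) := by
  have hk0 : 0 < k := by rcases Nat.eq_zero_or_pos k with h | h; · simp [h] at hk
                         · exact h
  have e : ∀ i n : ℕ, (q ^ d) ^ (k * n + i + 1) = q ^ (6 * n + d * (i + 1)) := by
    intro i n; rw [← pow_mul, ← hk]; congr 1; ring
  rw [EE, tprod_regroup hk0 (mult_one_sub (summable_pow_succ (by positivity) (pow_lt_one₀ h0.le h1 hd.ne')))]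
  · simp_rw [e]; rfl
  · intro i; simp_rw [e]; exact mult6 h0 h1 _

lemma MM_split {q : ℝ} (h0 : 0 < q) (h1 : q < 1) {d k : ℕ} (hd : 0 < d) (hk : d * k = 6) :
    MM (q ^ d) = ∑ i ∈ Finset.range k, SS q (d * (i + 1)) := by
  have hk0 : 0 < k := by rcases Nat.eq_zero_or_pos k with h | h; · simp [h] at hk
                         · exact h
  have e : ∀ i n : ℕ, (q ^ d) ^ (k * n + i + 1) = q ^ (6 * n + d * (i + 1)) := by
    intro i n; rw [← pow_mul, ← hk]; congr 1; ring
  rw [MM, tsum_regroup hk0 (kk1 (by positivity) (pow_lt_one₀ h0.le h1 hd.ne'))]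
  · simp_rw [e]; rfl
  · intro i; simp_rw [e]; exact kk6 h0 h1 _ (by positivity)

lemma EE_vals {q : ℝ} (h0 : 0 < q) (h1 : q < 1) :
    EE q = aa q 1 * aa q 2 * aa q 3 * aa q 4 * aa q 5 * aa q 6 ∧
    EE (q ^ 2) = aa q 2 * aa q 4 * aa q 6 ∧ EE (q ^ 3) = aa q 3 * aa q 6 ∧ EE (q ^ 6) = aa q 6 := by
  have e1 := EE_split h0 h1 (d := 1) (k := 6) (by norm_num) (by norm_num)
  have e2 := EE_split h0 h1 (d := 2) (k := 3) (by norm_num) (by norm_num)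
  have e3 := EE_split h0 h1 (d := 3) (k := 2) (by norm_num) (by norm_num)
  have e6 := EE_split h0 h1 (d := 6) (k := 1) (by norm_num) (by norm_num)
  simp [Finset.prod_range_succ] at e1 e2 e3 e6
  exact ⟨e1, e2, e3, e6⟩

lemma MM_vals {q : ℝ} (h0 : 0 < q) (h1 : q < 1) :
    MM q - 2 * MM (q ^ 2) - MM (q ^ 3) + 2 * MM (q ^ 6) = SS q 1 + SS q 5 - SS q 2 - SS q 4 := by
  have e1 := MM_split h0 h1 (d := 1) (k := 6) (by norm_num) (by norm_num)
  have e2 := MM_split h0 h1 (d := 2) (k := 3) (by norm_num) (by norm_num)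
  have e3 := MM_split h0 h1 (d := 3) (k := 2) (by norm_num) (by norm_num)
  have e6 := MM_split h0 h1 (d := 6) (k := 1) (by norm_num) (by norm_num)
  simp [Finset.sum_range_succ] at e1 e2 e3 e6
  linarith

lemma th_val {q : ℝ} (h0 : 0 < q) (h1 : q < 1) {i j : ℕ} (hij : i + j = 6) :
    th (q ^ 6) (q ^ i) = aa q i * aa q j := by
  have e : ∀ n : ℕ, (1 - q ^ i * (q ^ 6) ^ n) * (1 - (q ^ 6) ^ (n + 1) / q ^ i) =
      (1 - q ^ (6 * n + i)) * (1 - q ^ (6 * n + j)) := by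
    intro n
    have : (q ^ 6) ^ (n + 1) = q ^ (6 * n + j) * q ^ i := by
      rw [← pow_mul, ← pow_add]; congr 1; omega
    rw [this, mul_div_cancel_right₀ _ (by positivity), ← pow_mul, pow_add q (6 * n) i, mul_comm (q ^ i)]
  rw [th]; simp_rw [e]
  exact (mult6 h0 h1 i).tprod_mul (mult6 h0 h1 j)

lemma relB_t {q : ℝ} (h0 : 0 < q) (h1 : q < 1) :
    q * (aa q 1 * aa q 5) ^ 4 + (aa q 3 * aa q 3) ^ 3 * (aa q 1 * aa q 5) = (aa q 2 * aa q 4) ^ 4 := by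
  have w := weier (r := q ^ 3) (x := q ^ 3) (y := q ^ 2) (u := q ^ 1) (by positivity)
    (pow_lt_one₀ h0.le h1 (by norm_num)) (by positivity) (by positivity) (by positivity)
  have d1 : q ^ 3 / q ^ 2 = q ^ 1 := by field_simp
  have d2 : q ^ 2 / q ^ 1 = q ^ 1 := by field_simp
  have d3 : q ^ 3 / q ^ 1 = q ^ 2 := by field_simp
  rw [← pow_mul, show 3 * 2 = 6 by norm_num] at w
  simp only [tD, mul_one, div_one, d1, d2, d3, ← pow_add, Nat.reduceAdd] at w
  rw [th_val h0 h1 (i := 5) (j := 1) (by norm_num), th_val h0 h1 (i := 1) (j := 5) (by norm_num),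
    th_val h0 h1 (i := 2) (j := 4) (by norm_num), th_val h0 h1 (i := 3) (j := 3) (by norm_num),
    th_val h0 h1 (i := 4) (j := 2) (by norm_num)] at w
  field_simp at w
  linear_combination w

lemma relB {q : ℝ} (h0 : 0 < q) (h1 : q < 1) :
    EE q * EE (q ^ 2) ^ 3 * EE (q ^ 3) ^ 9 + q * EE q ^ 4 * EE (q ^ 6) ^ 9 =
      EE (q ^ 2) ^ 8 * EE (q ^ 3) ^ 4 * EE (q ^ 6) := by
  obtain ⟨e1, e2, e3, e6⟩ := EE_vals h0 h1
  have := relB_t h0 h1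
  rw [e1, e2, e3, e6]
  linear_combination aa q 2 ^ 4 * aa q 4 ^ 4 * aa q 6 ^ 13 * aa q 3 ^ 4 * this

lemma th_pair {q s : ℝ} (h0 : 0 < q) (h1 : q < 1) (hs : 0 < s) {i j : ℕ} (hij : i + j = 6) (hi : 0 < i)
    (hj : 0 < j) :
    th (q ^ 6) (q ^ i * s) * th (q ^ 6) (q ^ i / s) =
      (aa q i * aa q j) ^ 2 * (WW q (s + 1 / s - 2) i * WW q (s + 1 / s - 2) j) := by
  have p0 : 0 < q ^ 6 := by positivity
  have p1 : q ^ 6 < 1 := pow_lt_one₀ h0.le h1 (by norm_num)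
  have key : ∀ m : ℕ, 0 < m → (1 - s * q ^ m) * (1 - q ^ m / s) =
      (1 - q ^ m) ^ 2 * (1 - (s + 1 / s - 2) * kk (q ^ m)) := by
    intro m hm
    have : 0 < 1 - q ^ m := by linarith [pow_lt_one₀ h0.le h1 hm.ne']
    unfold kk
    field_simp
    ring
  have e : ∀ n : ℕ, ((1 - (q ^ i * s) * (q ^ 6) ^ n) * (1 - (q ^ 6) ^ (n + 1) / (q ^ i * s))) *
      ((1 - (q ^ i / s) * (q ^ 6) ^ n) * (1 - (q ^ 6) ^ (n + 1) / (q ^ i / s))) =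
      (((1 - q ^ (6 * n + i)) * (1 - q ^ (6 * n + j))) * ((1 - q ^ (6 * n + i)) * (1 - q ^ (6 * n + j)))) *
      ((1 - (s + 1 / s - 2) * kk (q ^ (6 * n + i))) * (1 - (s + 1 / s - 2) * kk (q ^ (6 * n + j)))) := by
    intro n
    have h3 : (q ^ 6) ^ (n + 1) = q ^ (6 * n + j) * q ^ i := by
      rw [← pow_mul, ← pow_add]; congr 1; omega
    have k1 := key (6 * n + i) (by omega)
    have k2 := key (6 * n + j) (by omega)
    have h4 : q ^ (6 * n + i) = q ^ i * (q ^ 6) ^ n := by rw [← pow_mul, pow_add, mul_comm]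
    have h5 : q ^ (6 * n + j) * q ^ i / (q ^ i * s) = q ^ (6 * n + j) / s := by field_simp
    have h6 : q ^ (6 * n + j) * q ^ i / (q ^ i / s) = s * q ^ (6 * n + j) := by field_simp
    rw [h3, h5, h6]
    have h7 : q ^ i * s * (q ^ 6) ^ n = s * q ^ (6 * n + i) := by rw [h4]; ring
    have h8 : q ^ i / s * (q ^ 6) ^ n = q ^ (6 * n + i) / s := by rw [h4]; ring
    rw [h7, h8]
    calc _ = ((1 - s * q ^ (6 * n + i)) * (1 - q ^ (6 * n + i) / s)) *
          ((1 - s * q ^ (6 * n + j)) * (1 - q ^ (6 * n + j) / s)) := by ring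
      _ = _ := by rw [k1, k2]; ring
  have mW : ∀ i, 0 < i → Multipliable (fun n : ℕ => 1 - (s + 1 / s - 2) * kk (q ^ (6 * n + i))) :=
    fun i hi => mult_one_sub ((kk6 h0 h1 i hi).mul_left _)
  have mt := fun x => (mult_th1 p0 p1 x).mul (mult_th2 p0 p1 x)
  have ma := (mult6 h0 h1 i).mul (mult6 h0 h1 j)
  rw [th, th, ← (mt _).tprod_mul (mt _), tprod_congr e, (ma.mul ma).tprod_mul ((mW i hi).mul (mW j hj)),
    ma.tprod_mul ma, (mult6 h0 h1 i).tprod_mul (mult6 h0 h1 j), (mW i hi).tprod_mul (mW j hj)]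
  rw [pow_two]; rfl

lemma th_self {q s : ℝ} (h0 : 0 < q) (h1 : q < 1) (hs : 0 < s) :
    th (q ^ 6) s = (1 - s) * (aa q 6 ^ 2 * WW q (s + 1 / s - 2) 6) := by
  have p0 : 0 < q ^ 6 := by positivity
  have p1 : q ^ 6 < 1 := pow_lt_one₀ h0.le h1 (by norm_num)
  have m1 := mult_th1 p0 p1 s
  have m2 := mult_th2 p0 p1 s
  have m1' : Multipliable (fun n : ℕ => 1 - s * (q ^ 6) ^ (n + 1)) :=
    mult_one_sub ((summable_pow_succ p0 p1).mul_left s)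
  have mW : Multipliable (fun n : ℕ => 1 - (s + 1 / s - 2) * kk (q ^ (6 * n + 6))) :=
    mult_one_sub ((kk6 h0 h1 6 (by norm_num)).mul_left _)
  have key : ∀ n : ℕ, (1 - s * (q ^ 6) ^ (n + 1)) * (1 - (q ^ 6) ^ (n + 1) / s) =
      ((1 - q ^ (6 * n + 6)) * (1 - q ^ (6 * n + 6))) * (1 - (s + 1 / s - 2) * kk (q ^ (6 * n + 6))) := by
    intro n
    have e : (q ^ 6) ^ (n + 1) = q ^ (6 * n + 6) := by rw [← pow_mul, Nat.mul_succ]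
    have : 0 < 1 - q ^ (6 * n + 6) := by linarith [pow_lt_one₀ h0.le h1 (show 6 * n + 6 ≠ 0 by omega)]
    rw [e]
    unfold kk
    generalize q ^ (6 * n + 6) = z at *
    field_simp
    ring
  have ma := mult6 h0 h1 6
  have hz : ∏' n : ℕ, (1 - s * (q ^ 6) ^ n) = (1 - s * (q ^ 6) ^ 0) * ∏' n : ℕ, (1 - s * (q ^ 6) ^ (n + 1)) :=
    tprod_eq_zero_mul' (f := fun n : ℕ => 1 - s * (q ^ 6) ^ n) m1'
  rw [th, m1.tprod_mul m2, hz, pow_zero, mul_one, mul_assoc, ← m1'.tprod_mul m2,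
    tprod_congr key, (ma.mul ma).tprod_mul mW, ma.tprod_mul ma, pow_two]
  simp only [aa, WW]

lemma weier2 {q s : ℝ} (h0 : 0 < q) (h1 : q < 1) (hs : 0 < s) :
    q * (aa q 3 * aa q 3) * (s + 1 / s - 2) * aa q 6 ^ 4 * WW q (s + 1 / s - 2) 6 ^ 2 =
    (aa q 2 * aa q 4) ^ 2 * (aa q 1 * aa q 5) * (WW q (s + 1 / s - 2) 2 * WW q (s + 1 / s - 2) 4 -
      WW q (s + 1 / s - 2) 1 * WW q (s + 1 / s - 2) 5) := by
  have w := weier (r := q ^ 3) (x := q ^ 2) (y := q ^ 1) (u := s) (by positivity)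
    (pow_lt_one₀ h0.le h1 (by norm_num)) (by positivity) (by positivity) (by positivity)
  have d2 : q ^ 2 / q ^ 1 = q ^ 1 := by field_simp
  rw [← pow_mul, show 3 * 2 = 6 by norm_num] at w
  simp only [tD, mul_one, div_one, d2, ← pow_add, Nat.reduceAdd] at w
  rw [th_pair h0 h1 hs (i := 1) (j := 5) (by norm_num) (by norm_num) (by norm_num),
    th_pair h0 h1 hs (i := 2) (j := 4) (by norm_num) (by norm_num) (by norm_num),
    th_self h0 h1 hs,  th_val h0 h1 (i := 1) (j := 5) (by norm_num),
    th_val h0 h1 (i := 2) (j := 4) (by norm_num), th_val h0 h1 (i := 3) (j := 3) (by norm_num)] at w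
  have a1 := aa_pos h0 h1 1 (by norm_num)
  have a5 := aa_pos h0 h1 5 (by norm_num)
  generalize hW : WW q (s + 1 / s - 2) = F at w ⊢
  have hε : s + 1 / s - 2 = (1 - s) ^ 2 / s := by field_simp; ring
  rw [hε]
  field_simp at w ⊢
  linear_combination w

lemma WW_bounds {c : ℕ → ℝ} (hc : Summable c) (h0 : ∀ n, 0 ≤ c n) (h1 : ∀ n, c n ≤ 1) :
    1 - ∑' n, c n ≤ ∏' n, (1 - c n) ∧ ∏' n, (1 - c n) ≤ Real.exp (-∑' n, c n) := by
  have ht := (mult_one_sub hc).hasProd.tendsto_prod_nat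
  have hs := hc.hasSum.tendsto_sum_nat
  constructor
  · refine le_of_tendsto_of_tendsto' (hs.const_sub 1) ht fun N => ?_
    have : ∀ N : ℕ, 0 ≤ ∏ n ∈ Finset.range N, (1 - c n) ∧ ∏ n ∈ Finset.range N, (1 - c n) ≤ 1 ∧
        1 - ∑ n ∈ Finset.range N, c n ≤ ∏ n ∈ Finset.range N, (1 - c n) := by
      intro N
      induction N with
      | zero => simp
      | succ N ih =>
        rw [Finset.prod_range_succ, Finset.sum_range_succ]
        obtain ⟨i1, i2, i3⟩ := ih
        have a := h0 N
        have b := h1 N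
        refine ⟨mul_nonneg i1 (by linarith), ?_, ?_⟩ <;> nlinarith
    exact (this N).2.2
  · refine le_of_tendsto_of_tendsto' ht ((Real.continuous_exp.tendsto _).comp hs.neg) fun N => ?_
    simp only [Function.comp]
    rw [← Finset.sum_neg_distrib, Real.exp_sum]
    refine Finset.prod_le_prod (fun n _ => by linarith [h1 n]) fun n _ => ?_
    have := Real.add_one_le_exp (-c n)
    linarith

open Filter Topology in
lemma WW_deriv {q : ℝ} (h0 : 0 < q) (h1 : q < 1) (i : ℕ) (hi : 0 < i) :
    HasDerivWithinAt (fun e => WW q e i) (-SS q i) (Set.Ici 0) 0 := by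
  have hsum := kk6 h0 h1 i hi
  have hnn : ∀ n : ℕ, 0 ≤ kk (q ^ (6 * n + i)) := fun n => kk_nonneg (by positivity)
  have hw0 : WW q 0 i = 1 := by simp [WW]
  have hSS : 0 ≤ SS q i := tsum_nonneg hnn
  rw [hasDerivWithinAt_iff_tendsto_slope]
  have hset : Set.Ici (0:ℝ) \ {0} = Set.Ioi 0 := by
    ext x; simp [lt_iff_le_and_ne, eq_comm]
  rw [hset]
  have hE : HasDerivAt (fun e : ℝ => Real.exp (-(e * SS q i))) (-SS q i) 0 := by
    have := (((hasDerivAt_id (0:ℝ)).mul_const (SS q i)).neg).exp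
    simpa using this
  have hE' := (hasDerivAt_iff_tendsto_slope.1 hE).mono_left
    (nhdsWithin_mono (0:ℝ) (fun x (hx : (0:ℝ) < x) => hx.ne' : Set.Ioi (0:ℝ) ⊆ {0}ᶜ))
  have hbd : ∀ᶠ e in 𝓝[>] (0:ℝ), e < 1 / (SS q i + 1) :=
    nhdsWithin_le_nhds (Iio_mem_nhds (by positivity))
  refine tendsto_of_tendsto_of_tendsto_of_le_of_le' tendsto_const_nhds hE' ?_ ?_
  · filter_upwards [hbd, self_mem_nhdsWithin] with e he hpos
    have hpos : 0 < e := hpos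
    have hb : ∀ n : ℕ, e * kk (q ^ (6 * n + i)) ≤ 1 := by
      intro n
      have : kk (q ^ (6 * n + i)) ≤ SS q i := hsum.le_tsum n (fun j _ => hnn j)
      rw [lt_div_iff₀ (by positivity)] at he
      nlinarith
    have := (WW_bounds (hsum.mul_left e) (fun n => mul_nonneg hpos.le (hnn n)) hb).1
    rw [tsum_mul_left] at this
    rw [slope_def_field, hw0, sub_zero, le_div_iff₀ hpos]
    change 1 - e * SS q i ≤ WW q e i at this
    linarith
  · filter_upwards [hbd, self_mem_nhdsWithin] with e he hpos
    have hpos : 0 < e := hpos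
    have hb : ∀ n : ℕ, e * kk (q ^ (6 * n + i)) ≤ 1 := by
      intro n
      have : kk (q ^ (6 * n + i)) ≤ SS q i := hsum.le_tsum n (fun j _ => hnn j)
      rw [lt_div_iff₀ (by positivity)] at he
      nlinarith
    have := (WW_bounds (hsum.mul_left e) (fun n => mul_nonneg hpos.le (hnn n)) hb).2
    rw [tsum_mul_left] at this
    change WW q e i ≤ Real.exp (-(e * SS q i)) at this
    rw [slope_def_field, slope_def_field, hw0, sub_zero]
    simp only [zero_mul, neg_zero, Real.exp_zero]
    gcongr

lemma SS_id {q : ℝ} (h0 : 0 < q) (h1 : q < 1) :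
    q * (aa q 3 * aa q 3) * aa q 6 ^ 4 =
    (aa q 2 * aa q 4) ^ 2 * (aa q 1 * aa q 5) * (SS q 1 + SS q 5 - SS q 2 - SS q 4) := by
  have hw0 : ∀ i, WW q 0 i = 1 := by intro i; simp [WW]
  have d := fun i hi => WW_deriv h0 h1 i hi
  have key : ∀ e ∈ Set.Ici (0:ℝ), q * (aa q 3 * aa q 3) * aa q 6 ^ 4 * (e * WW q e 6 ^ 2) =
    (aa q 2 * aa q 4) ^ 2 * (aa q 1 * aa q 5) * (WW q e 2 * WW q e 4 - WW q e 1 * WW q e 5) := by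
    intro e he
    have he : 0 ≤ e := he
    obtain ⟨s, hs, hse⟩ : ∃ s : ℝ, 0 < s ∧ s + 1 / s - 2 = e := by
      have hd : 0 ≤ e ^ 2 + 4 * e := by positivity
      refine ⟨(2 + e + Real.sqrt (e ^ 2 + 4 * e)) / 2, by positivity, ?_⟩
      have := Real.sq_sqrt hd
      have h3 : 0 < 2 + e + Real.sqrt (e ^ 2 + 4 * e) := by positivity
      generalize Real.sqrt (e ^ 2 + 4 * e) = w at *
      field_simp
      linear_combination this
    have := weier2 h0 h1 hs
    rw [hse] at this
    linear_combination this
  have D1 := (((hasDerivAt_id (0:ℝ)).hasDerivWithinAt (s := Set.Ici 0)).mul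
    ((d 6 (by norm_num)).pow 2)).const_mul (q * (aa q 3 * aa q 3) * aa q 6 ^ 4)
  have D2 := (((d 2 (by norm_num)).mul (d 4 (by norm_num))).sub
    ((d 1 (by norm_num)).mul (d 5 (by norm_num)))).const_mul ((aa q 2 * aa q 4) ^ 2 * (aa q 1 * aa q 5))
  have D3 := D2.congr_of_mem (f₁ := fun e => q * (aa q 3 * aa q 3) * aa q 6 ^ 4 * (e * WW q e 6 ^ 2))
    (fun e he => key e he) (Set.self_mem_Ici)
  have := UniqueDiffWithinAt.eq_deriv _ (uniqueDiffOn_Ici (0:ℝ) 0 Set.self_mem_Ici) D1 D3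
  simp only [hw0] at this
  simp [hw0] at this
  linear_combination this

lemma MM_id {q : ℝ} (h0 : 0 < q) (h1 : q < 1) :
    (MM q - 2 * MM (q ^ 2) - MM (q ^ 3) + 2 * MM (q ^ 6)) * (EE q * EE (q ^ 2)) =
      q * EE (q ^ 3) ^ 3 * EE (q ^ 6) ^ 3 := by
  rw [MM_vals h0 h1]
  obtain ⟨e1, e2, e3, e6⟩ := EE_vals h0 h1
  rw [e1, e2, e3, e6]
  linear_combination -(aa q 3 * aa q 6 ^ 2) * SS_id h0 h1

lemma lambert {q : ℝ} (h0 : 0 < q) (h1 : q < 1) :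
    ∑' j : ℕ, ((j:ℝ) + 1) * q ^ (j + 1) / (1 - q ^ (j + 1)) = MM q := by
  have hq : ‖q‖ < 1 := by rwa [Real.norm_of_nonneg h0.le]
  have e1 := tsum_pow_div_one_sub_eq_tsum_sigma hq 1
  have e2 := tsum_prod_pow_eq_tsum_sigma 1 hq
  have e3 : ∀ d : ℕ+, ∑' c : ℕ+, (c:ℝ) ^ 1 * q ^ ((d:ℕ) * (c:ℕ)) = kk (q ^ (d:ℕ)) := by
    intro d
    have hd : ‖q ^ (d:ℕ)‖ < 1 := by
      rw [norm_pow]; exact pow_lt_one₀ (norm_nonneg _) hq d.ne_zero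
    have := tsum_coe_mul_geometric_of_norm_lt_one hd
    have h4 := tsum_zero_pnat_eq_tsum_nat (f := fun n : ℕ => (n:ℝ) * (q ^ (d:ℕ)) ^ n)
      (by simpa using summable_pow_mul_geometric_of_norm_lt_one 1 hd)
    rw [this] at h4
    unfold kk
    rw [← h4]
    simp [pow_mul]
  simp_rw [e3] at e2
  rw [← e2] at e1
  rw [tsum_pnat_eq_tsum_succ (f := fun n : ℕ => (n:ℝ) ^ 1 * q ^ n / (1 - q ^ n)),
    tsum_pnat_eq_tsum_succ (f := fun n : ℕ => kk (q ^ n))] at e1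
  simp only [pow_one, Nat.cast_add, Nat.cast_one] at e1
  exact e1

lemma log_summable {q : ℝ} (h0 : 0 < q) (h1 : q < 1) :
    Summable (fun n : ℕ => Real.log (1 - q ^ (n + 1))) := by
  simpa [sub_eq_add_neg] using Real.summable_log_one_add_of_summable (summable_pow_succ h0 h1).neg

lemma EE_exp {q : ℝ} (h0 : 0 < q) (h1 : q < 1) :
    EE q = Real.exp (∑' n : ℕ, Real.log (1 - q ^ (n + 1))) := by
  rw [EE, Real.rexp_tsum_eq_tprod _ (log_summable h0 h1)]
  intro n; linarith [one_sub_pow_pos h0 h1 n]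

open Filter Topology in
lemma EE_deriv {q : ℝ} (h0 : 0 < q) (h1 : q < 1) : HasDerivAt EE (-(EE q * MM q / q)) q := by
  set ρ := (1 + q) / 2 with hρ
  have r1 : ρ < 1 := by rw [hρ]; linarith
  have r2 : q < ρ := by rw [hρ]; linarith
  have r0 : 0 < ρ := by linarith
  have hu : Summable (fun n : ℕ => ((n:ℝ) + 1) * ρ ^ n * (1 / (1 - ρ))) := by
    apply Summable.mul_right
    have hr : ‖ρ‖ < 1 := by rwa [Real.norm_of_nonneg r0.le]
    have a := summable_pow_mul_geometric_of_norm_lt_one 1 hr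
    have b := summable_geometric_of_norm_lt_one hr
    refine (a.add b).congr fun n => ?_
    simp; ring
  have hd := hasDerivAt_tsum_of_isPreconnected (g := fun (n : ℕ) (x : ℝ) => Real.log (1 - x ^ (n + 1)))
    (g' := fun (n : ℕ) (x : ℝ) => -(((n:ℝ) + 1) * x ^ n) / (1 - x ^ (n + 1)))
    (t := Set.Ioo 0 ρ) (y₀ := q) (y := q) hu isOpen_Ioo isPreconnected_Ioo ?_ ?_ ⟨h0, r2⟩
    (log_summable h0 h1) ⟨h0, r2⟩
  · have he := hd.exp
    have : EE =ᶠ[𝓝 q] fun x => Real.exp (∑' n : ℕ, Real.log (1 - x ^ (n + 1))) := by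
      filter_upwards [Ioo_mem_nhds h0 h1] with x hx using EE_exp hx.1 hx.2
    refine (he.congr_of_eventuallyEq this).congr_deriv ?_
    rw [← EE_exp h0 h1, ← lambert h0 h1, ← neg_div, ← mul_neg, mul_div_assoc, ← tsum_neg, ← tsum_div_const]
    congr 1
    refine tsum_congr fun n => ?_
    have := one_sub_pow_pos h0 h1 n
    rw [pow_succ q n] at this ⊢
    field_simp
  · rintro n y ⟨y0, y1⟩
    have := one_sub_pow_pos y0 (y1.trans r1) n
    have := ((hasDerivAt_pow (n + 1) y).const_sub 1).log this.ne'
    simpa using this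
  · rintro n y ⟨y0, y1⟩
    have p := one_sub_pow_pos y0 (y1.trans r1) n
    rw [norm_div, norm_neg, Real.norm_of_nonneg p.le, Real.norm_of_nonneg (by positivity), div_eq_mul_one_div]
    have : y ^ (n + 1) ≤ ρ := by
      calc y ^ (n + 1) ≤ y ^ 1 := pow_le_pow_of_le_one y0.le (y1.trans r1).le (by omega)
        _ ≤ ρ := by rw [pow_one]; exact y1.le
    have h3 : 0 < 1 - ρ := by linarith
    have h4 : y ≤ ρ := y1.le
    gcongr

lemma EEd_deriv {q : ℝ} (h0 : 0 < q) (h1 : q < 1) (d : ℕ) (hd : 0 < d) :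
    HasDerivAt (fun x => EE (x ^ d)) (-(d * EE (q ^ d) * MM (q ^ d) / q)) q := by
  have := (EE_deriv (by positivity : 0 < q ^ d) (pow_lt_one₀ h0.le h1 hd.ne')).comp q (hasDerivAt_pow d q)
  refine this.congr_deriv ?_
  obtain ⟨e, rfl⟩ : ∃ e, d = e + 1 := ⟨d - 1, by omega⟩
  rw [pow_succ q e, Nat.add_sub_cancel]
  field_simp

noncomputable def gg (s : ℝ) : ℝ := Real.exp (-(π * s / 12)) * EE (Real.exp (-(2 * π * s)))

lemma exp_lt1 {s : ℝ} (hs : 0 < s) : Real.exp (-(2 * π * s)) < 1 := by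
  rw [Real.exp_lt_one_iff]
  have := Real.pi_pos
  simp; positivity

lemma gg_pos {s : ℝ} (hs : 0 < s) : 0 < gg s :=
  mul_pos (Real.exp_pos _) (EE_pos (Real.exp_pos _) (exp_lt1 hs))

lemma eta_gg {s : ℝ} (hs : 0 < s) : ModularForm.eta (s * Complex.I) = (gg s : ℂ) := by
  have e : ∀ n : ℕ, (1 - ModularForm.eta_q n (s * Complex.I)) =
      ((1 - (Real.exp (-(2 * π * s))) ^ (n + 1) : ℝ) : ℂ) := by
    intro n
    rw [ModularForm.eta_q_eq_pow]
    push_cast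
    congr 3
    linear_combination (2 * π * s : ℂ) * Complex.I_mul_I
  rw [ModularForm.eta]
  simp_rw [e]
  have h2 := (mult_one_sub (summable_pow_succ (Real.exp_pos _) (exp_lt1 hs))).map_tprod
    (Complex.ofRealHom) (Complex.continuous_ofReal)
  have h3 : ∏' n : ℕ, ((1 - (Real.exp (-(2 * π * s))) ^ (n + 1) : ℝ) : ℂ) = (EE (Real.exp (-(2 * π * s))) : ℂ) := by
    rw [EE]; exact h2.symm
  rw [h3, gg, Complex.ofReal_mul, Function.Periodic.qParam]
  push_cast
  congr 2
  linear_combination (π * s / 12 : ℂ) * Complex.I_mul_I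

lemma csqrt_mulI {s : ℝ} (hs : 0 < s) : Complex.sqrt (s * Complex.I) = (Real.sqrt s : ℂ) * Complex.sqrt Complex.I := by
  have hsc : (s:ℂ) ≠ 0 := by exact_mod_cast hs.ne'
  rw [_root_.sqrt_eq_exp (mul_ne_zero hsc Complex.I_ne_zero), _root_.sqrt_eq_exp Complex.I_ne_zero,
    Complex.log_ofReal_mul hs Complex.I_ne_zero, add_div, Complex.exp_add]
  congr 1
  rw [Real.sqrt_eq_rpow, Real.rpow_def_of_pos hs]
  push_cast
  congr 1
  ring

lemma gg_inv {s : ℝ} (hs : 0 < s) : gg (1 / s) = Real.sqrt s * gg s := by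
  have hsc : (s:ℂ) ≠ 0 := by exact_mod_cast hs.ne'
  have hm : (s * Complex.I) ∈ UpperHalfPlane.upperHalfPlaneSet := by
    simpa [UpperHalfPlane.upperHalfPlaneSet] using hs
  have h := ModularForm.eta_comp_eq_csqrt_I_inv hm
  simp only [Function.comp, Pi.smul_apply, Pi.mul_apply, smul_eq_mul] at h
  have h1 : -1 / ((s:ℂ) * Complex.I) = ((1 / s : ℝ) : ℂ) * Complex.I := by
    push_cast
    field_simp
    simp
  have hI : Complex.sqrt Complex.I ≠ 0 := by
    rw [_root_.sqrt_eq_exp Complex.I_ne_zero]; exact Complex.exp_ne_zero _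
  rw [h1, eta_gg (by positivity), eta_gg hs, csqrt_mulI hs] at h
  have : (gg (1 / s) : ℂ) = ((Real.sqrt s * gg s : ℝ) : ℂ) := by
    rw [h]; push_cast; field_simp
  exact_mod_cast this

lemma gg_d (s : ℝ) (d : ℕ) : gg (d * s) = Real.exp (-(π * s / 12)) ^ d * EE (Real.exp (-(2 * π * s)) ^ d) := by
  rw [gg, ← Real.exp_nat_mul, ← Real.exp_nat_mul]
  congr 2
  · ring_nf
  · ring_nf

lemma exp24 (s : ℝ) : Real.exp (-(2 * π * s)) = Real.exp (-(π * s / 12)) ^ 24 := by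
  rw [← Real.exp_nat_mul]; push_cast; ring_nf

lemma gg_all (s : ℝ) :
    gg s = Real.exp (-(π * s / 12)) * EE (Real.exp (-(2 * π * s))) ∧
    gg (2 * s) = Real.exp (-(π * s / 12)) ^ 2 * EE (Real.exp (-(2 * π * s)) ^ 2) ∧
    gg (3 * s) = Real.exp (-(π * s / 12)) ^ 3 * EE (Real.exp (-(2 * π * s)) ^ 3) ∧
    gg (6 * s) = Real.exp (-(π * s / 12)) ^ 6 * EE (Real.exp (-(2 * π * s)) ^ 6) :=
  ⟨rfl, by exact_mod_cast gg_d s 2, by exact_mod_cast gg_d s 3, by exact_mod_cast gg_d s 6⟩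

lemma relBg {s : ℝ} (hs : 0 < s) :
    gg s * gg (2 * s) ^ 3 * gg (3 * s) ^ 9 + gg s ^ 4 * gg (6 * s) ^ 9 =
      gg (2 * s) ^ 8 * gg (3 * s) ^ 4 * gg (6 * s) := by
  obtain ⟨g1, g2, g3, g6⟩ := gg_all s
  have h := relB (Real.exp_pos (-(2 * π * s))) (exp_lt1 hs)
  rw [g1, g2, g3, g6]
  have h24 := exp24 s
  generalize EE (Real.exp (-(2 * π * s))) = x1 at *
  generalize EE (Real.exp (-(2 * π * s)) ^ 2) = x2 at *
  generalize EE (Real.exp (-(2 * π * s)) ^ 3) = x3 at *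
  generalize EE (Real.exp (-(2 * π * s)) ^ 6) = x6 at *
  generalize Real.exp (-(π * s / 12)) = c at *
  rw [h24] at h
  linear_combination c ^ 34 * h

lemma gg_trans {s : ℝ} (hs : 0 < s) :
    gg (1 / (6 * s)) = Real.sqrt (6 * s) * gg (6 * s) ∧
    gg (2 * (1 / (6 * s))) = Real.sqrt (3 * s) * gg (3 * s) ∧
    gg (3 * (1 / (6 * s))) = Real.sqrt (2 * s) * gg (2 * s) ∧
    gg (6 * (1 / (6 * s))) = Real.sqrt s * gg s := by
  refine ⟨gg_inv (by positivity), ?_, ?_, ?_⟩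
  · rw [← gg_inv (by positivity)]; congr 1; field_simp; norm_num
  · rw [← gg_inv (by positivity)]; congr 1; field_simp; norm_num
  · rw [← gg_inv (by positivity)]; congr 1; field_simp

lemma relAg {s : ℝ} (hs : 0 < s) :
    8 * gg (6 * s) * gg (3 * s) ^ 3 * gg (2 * s) ^ 9 + gg (6 * s) ^ 4 * gg s ^ 9 =
      9 * gg (3 * s) ^ 8 * gg (2 * s) ^ 4 * gg s := by
  have h := relBg (show 0 < 1 / (6 * s) by positivity)
  obtain ⟨t1, t2, t3, t6⟩ := gg_trans hs
  rw [t1, t2, t3, t6] at h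
  rw [Real.sqrt_mul (by norm_num), Real.sqrt_mul (by norm_num), Real.sqrt_mul (by norm_num),
    show (6:ℝ) = 2 * 3 by norm_num, Real.sqrt_mul (by norm_num)] at h
  have a2 : Real.sqrt 2 ^ 2 = 2 := Real.sq_sqrt (by norm_num)
  have a3 : Real.sqrt 3 ^ 2 = 3 := Real.sq_sqrt (by norm_num)
  have b2 : 0 < Real.sqrt 2 := by positivity
  have b3 : 0 < Real.sqrt 3 := by positivity
  have bs : 0 < Real.sqrt s := by positivity
  norm_num at h ⊢
  generalize gg s = y1 at *
  generalize gg (2 * s) = y2 at *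
  generalize gg (3 * s) = y3 at *
  generalize gg (6 * s) = y6 at *
  generalize Real.sqrt 2 = u at *
  generalize Real.sqrt 3 = v at *
  generalize Real.sqrt s = w at *
  have e1 : u ^ 10 = 32 := by rw [show u ^ 10 = (u ^ 2) ^ 5 by ring, a2]; norm_num
  have e2 : v ^ 4 = 9 := by rw [show v ^ 4 = (v ^ 2) ^ 2 by ring, a3]; norm_num
  have e3 : u ^ 4 = 4 := by rw [show u ^ 4 = (u ^ 2) ^ 2 by ring, a2]; norm_num
  have e4 : v ^ 8 = 81 := by rw [show v ^ 8 = (v ^ 2) ^ 4 by ring, a3]; norm_num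
  have h' : (v ^ 4 * w ^ 13) * (u ^ 10 * (y6 * y3 ^ 3 * y2 ^ 9) + u ^ 4 * (y6 ^ 4 * y1 ^ 9)) =
      (v ^ 4 * w ^ 13) * (v ^ 4 * u ^ 4 * (y3 ^ 8 * y2 ^ 4 * y1)) := by
    linear_combination h
  have h2 := mul_left_cancel₀ (by positivity) h'
  rw [e1, e2, e3] at h2
  linear_combination h2 / 4

lemma relA {q : ℝ} (h0 : 0 < q) (h1 : q < 1) :
    8 * EE (q ^ 6) * EE (q ^ 3) ^ 3 * EE (q ^ 2) ^ 9 + EE (q ^ 6) ^ 4 * EE q ^ 9 =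
      9 * EE (q ^ 3) ^ 8 * EE (q ^ 2) ^ 4 * EE q := by
  have hl := Real.log_neg h0 h1
  have hpi := Real.pi_pos
  have hs : 0 < -Real.log q / (2 * π) := div_pos (by linarith) (by positivity)
  have h := relAg hs
  obtain ⟨g1, g2, g3, g6⟩ := gg_all (-Real.log q / (2 * π))
  rw [g1, g2, g3, g6] at h
  have hq : Real.exp (-(2 * π * (-Real.log q / (2 * π)))) = q := by
    rw [mul_div_cancel₀ _ (by positivity), neg_neg, Real.exp_log h0]
  rw [hq] at h
  have hc := Real.exp_pos (-(π * (-Real.log q / (2 * π)) / 12))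
  generalize Real.exp (-(π * (-Real.log q / (2 * π)) / 12)) = c at *
  refine mul_left_cancel₀ (show c ^ 33 ≠ 0 by positivity) ?_
  linear_combination h

lemma hasProd_pow' {f : ℕ → ℝ} {a : ℝ} (h : HasProd f a) (k : ℕ) : HasProd (fun n => f n ^ k) (a ^ k) := by
  induction k with
  | zero => simp
  | succ k ih => simpa only [pow_succ] using ih.mul h

lemma EEd_hasProd {q : ℝ} (h0 : 0 < q) (h1 : q < 1) (d : ℕ) (hd : 0 < d) :
    HasProd (fun j : ℕ => 1 - q ^ (d * (j + 1))) (EE (q ^ d)) := by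
  have := (mult_one_sub (summable_pow_succ (by positivity : 0 < q ^ d) (pow_lt_one₀ h0.le h1 hd.ne'))).hasProd
  simp only [← pow_mul] at this
  simpa only [EE, ← pow_mul] using this

lemma EEd_pos {q : ℝ} (h0 : 0 < q) (h1 : q < 1) (d : ℕ) (hd : 0 < d) : 0 < EE (q ^ d) :=
  EE_pos (by positivity) (pow_lt_one₀ h0.le h1 hd.ne')

lemma V3_eq {q : ℝ} (h0 : 0 < q) (h1 : q < 1) :
    V3 q = q * (EE q ^ 3 * EE (q ^ 6) ^ 9 / (EE (q ^ 2) ^ 3 * EE (q ^ 3) ^ 9)) := by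
  have H1 : HasProd (fun j : ℕ => 1 - q ^ (j + 1)) (EE q) := (mult_one_sub (summable_pow_succ h0 h1)).hasProd
  have p2 := EEd_pos h0 h1 2 (by norm_num)
  have p3 := EEd_pos h0 h1 3 (by norm_num)
  have H := ((hasProd_pow' H1 3).mul (hasProd_pow' (EEd_hasProd h0 h1 6 (by norm_num)) 9)).div₀
    ((hasProd_pow' (EEd_hasProd h0 h1 2 (by norm_num)) 3).mul
      (hasProd_pow' (EEd_hasProd h0 h1 3 (by norm_num)) 9)) (by positivity)
  rw [V3, ← H.tprod_eq]

lemma U3_eq {q : ℝ} (h0 : 0 < q) (h1 : q < 1) :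
    U3 q = EE q ^ 6 * EE (q ^ 6) ^ 8 / EE (q ^ 3) ^ 10 := by
  have H1 : HasProd (fun j : ℕ => 1 - q ^ (j + 1)) (EE q) := (mult_one_sub (summable_pow_succ h0 h1)).hasProd
  have p3 := EEd_pos h0 h1 3 (by norm_num)
  have H := ((hasProd_pow' H1 6).mul (hasProd_pow' (EEd_hasProd h0 h1 6 (by norm_num)) 8)).div₀
      (hasProd_pow' (EEd_hasProd h0 h1 3 (by norm_num)) 10) (by positivity)
  rw [U3, ← H.tprod_eq]

noncomputable def hh (q : ℝ) : ℝ := EE (q ^ 1) ^ 9 * EE (q ^ 6) ^ 3 / (EE (q ^ 2) ^ 9 * EE (q ^ 3) ^ 3)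

lemma V3_hh {q : ℝ} (h0 : 0 < q) (h1 : q < 1) : V3 q = 9 / (8 + hh q) - 1 := by
  have B := relB h0 h1
  have A := relA h0 h1
  rw [V3_eq h0 h1, hh, pow_one]
  have p1 := EE_pos h0 h1
  have p2 := EEd_pos h0 h1 2 (by norm_num)
  have p3 := EEd_pos h0 h1 3 (by norm_num)
  have p6 := EEd_pos h0 h1 6 (by norm_num)
  generalize EE q = x1 at *
  generalize EE (q ^ 2) = x2 at *
  generalize EE (q ^ 3) = x3 at *
  generalize EE (q ^ 6) = x6 at *
  have e8 : 8 + x1 ^ 9 * x6 ^ 3 / (x2 ^ 9 * x3 ^ 3) = 9 * x3 ^ 5 * x1 / (x2 ^ 5 * x6) := by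
    field_simp
    linear_combination A
  rw [e8]
  field_simp
  linear_combination B

lemma hh_deriv {q : ℝ} (h0 : 0 < q) (h1 : q < 1) :
    HasDerivAt hh (-9 * hh q * (EE (q ^ 3) ^ 3 * EE (q ^ 6) ^ 3 / (EE q * EE (q ^ 2)))) q := by
  have p1 := EE_pos h0 h1
  have p2 := EEd_pos h0 h1 2 (by norm_num)
  have p3 := EEd_pos h0 h1 3 (by norm_num)
  have p6 := EEd_pos h0 h1 6 (by norm_num)
  have d1 := (EEd_deriv h0 h1 1 (by norm_num)).fun_pow 9
  have d2 := (EEd_deriv h0 h1 2 (by norm_num)).fun_pow 9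
  have d3 := (EEd_deriv h0 h1 3 (by norm_num)).fun_pow 3
  have d6 := (EEd_deriv h0 h1 6 (by norm_num)).fun_pow 3
  have D := (d1.fun_mul d6).fun_div (d2.fun_mul d3) (by positivity)
  refine HasDerivAt.congr_deriv (f := hh) D ?_
  have M := MM_id h0 h1
  have M' : EE (q ^ 3) ^ 3 * EE (q ^ 6) ^ 3 / (EE q * EE (q ^ 2)) =
      (MM q - 2 * MM (q ^ 2) - MM (q ^ 3) + 2 * MM (q ^ 6)) / q := by
    rw [div_eq_div_iff (by positivity) (by positivity)]
    linear_combination -M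
  rw [M', hh]
  clear M' M D d1 d2 d3 d6
  simp only [pow_one]
  generalize EE q = x1 at *
  generalize EE (q ^ 2) = x2 at *
  generalize EE (q ^ 3) = x3 at *
  generalize EE (q ^ 6) = x6 at *
  generalize MM q = m1 at *
  generalize MM (q ^ 2) = m2 at *
  generalize MM (q ^ 3) = m3 at *
  generalize MM (q ^ 6) = m6 at *
  push_cast
  field_simp
  norm_num
  ring

open Filter Topology in
lemma V3_deriv {q : ℝ} (h0 : 0 < q) (h1 : q < 1) : HasDerivAt V3 (U3 q) q := by
  have p1 := EE_pos h0 h1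
  have p2 := EEd_pos h0 h1 2 (by norm_num)
  have p3 := EEd_pos h0 h1 3 (by norm_num)
  have p6 := EEd_pos h0 h1 6 (by norm_num)
  have hp : 0 < hh q := by rw [hh, pow_one]; positivity
  have D := (((hasDerivAt_const q (9:ℝ)).fun_div ((hh_deriv h0 h1).const_add 8) (by positivity)).sub_const 1)
  have : V3 =ᶠ[𝓝 q] fun x => 9 / (8 + hh x) - 1 := by
    filter_upwards [Ioo_mem_nhds h0 h1] with x hx using V3_hh hx.1 hx.2
  refine (D.congr_of_eventuallyEq this).congr_deriv ?_
  have A := relA h0 h1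
  rw [U3_eq h0 h1]
  have e8 : 8 + hh q = 9 * EE (q ^ 3) ^ 5 * EE q / (EE (q ^ 2) ^ 5 * EE (q ^ 6)) := by
    rw [hh, pow_one]
    field_simp
    linear_combination A
  rw [e8, hh, pow_one]
  field_simp
  ring

lemma EE_ge {q : ℝ} (h0 : 0 < q) (h1 : q ≤ 1 / 4) : 2 / 3 ≤ EE q := by
  have hq1 : q < 1 := by linarith
  have := (WW_bounds (summable_pow_succ h0 hq1) (fun n => by positivity)
    (fun n => by linarith [one_sub_pow_pos h0 hq1 n])).1
  have e : ∑' n : ℕ, q ^ (n + 1) = q * (1 - q)⁻¹ := by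
    simp_rw [pow_succ']
    rw [tsum_mul_left, tsum_geometric_of_lt_one h0.le hq1]
  rw [e] at this
  have h3 : q * (1 - q)⁻¹ ≤ 1 / 3 := by
    rw [← div_eq_mul_inv, div_le_iff₀ (by linarith)]; linarith
  change _ ≤ EE q at this
  linarith

lemma V3_zero : V3 0 = 0 := by simp [V3]

lemma V3_pos {q : ℝ} (h0 : 0 < q) (h1 : q < 1) : 0 < V3 q := by
  rw [V3_eq h0 h1]
  have p1 := EE_pos h0 h1
  have p2 := EEd_pos h0 h1 2 (by norm_num)
  have p3 := EEd_pos h0 h1 3 (by norm_num)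
  have p6 := EEd_pos h0 h1 6 (by norm_num)
  positivity

lemma V3_le {q : ℝ} (h0 : 0 < q) (h1 : q ≤ 1 / 2) : V3 q ≤ q * (3 / 2) ^ 12 := by
  have hq1 : q < 1 := by linarith
  rw [V3_eq h0 hq1]
  have p1 := EE_pos h0 hq1
  have p6 := EEd_pos h0 hq1 6 (by norm_num)
  have l1 := EE_le_one h0 hq1
  have l6 := EE_le_one (q := q ^ 6) (by positivity) (pow_lt_one₀ h0.le hq1 (by norm_num))
  have b2 : q ^ 2 ≤ 1 / 4 := by nlinarith
  have b3 : q ^ 3 ≤ 1 / 4 := by nlinarith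
  have g2 := EE_ge (q := q ^ 2) (by positivity) b2
  have g3 := EE_ge (q := q ^ 3) (by positivity) b3
  have n1 : EE q ^ 3 * EE (q ^ 6) ^ 9 ≤ 1 := by
    have a := pow_le_one₀ (n := 3) p1.le l1
    have b := pow_le_one₀ (n := 9) p6.le l6
    exact mul_le_one₀ a (by positivity) b
  have n2 : (2 / 3 : ℝ) ^ 3 * (2 / 3) ^ 9 ≤ EE (q ^ 2) ^ 3 * EE (q ^ 3) ^ 9 := by gcongr
  have : EE q ^ 3 * EE (q ^ 6) ^ 9 / (EE (q ^ 2) ^ 3 * EE (q ^ 3) ^ 9) ≤ 1 / ((2 / 3 : ℝ) ^ 3 * (2 / 3) ^ 9) := by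
    gcongr
  calc _ ≤ q * (1 / ((2 / 3 : ℝ) ^ 3 * (2 / 3) ^ 9)) := by gcongr
    _ = _ := by norm_num

open Filter Topology in
lemma V3_int {q : ℝ} (h0 : 0 < q) (h1 : q < 1) : (∫ t in (0:ℝ)..q, U3 t) = V3 q := by
  have hc : ContinuousOn V3 (Set.Icc 0 q) := by
    intro x hx
    rcases hx.1.eq_or_lt with rfl | hpos
    · rw [ContinuousWithinAt, V3_zero]
      have u : Tendsto (fun y : ℝ => y * (3 / 2) ^ 12) (𝓝[Set.Icc 0 q] 0) (𝓝 0) := by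
        have : Tendsto (fun y : ℝ => y * (3 / 2) ^ 12) (𝓝 0) (𝓝 (0 * (3 / 2) ^ 12)) :=
          (continuous_id.mul continuous_const).tendsto 0
        rw [zero_mul] at this
        exact this.mono_left nhdsWithin_le_nhds
      have hlt : ∀ᶠ y in 𝓝[Set.Icc 0 q] (0:ℝ), y < 1 / 2 :=
        nhdsWithin_le_nhds (Iio_mem_nhds (by norm_num))
      refine tendsto_of_tendsto_of_tendsto_of_le_of_le' tendsto_const_nhds u ?_ ?_
      · filter_upwards [self_mem_nhdsWithin] with y hy
        rcases hy.1.eq_or_lt with rfl | hy0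
        · rw [V3_zero]
        · exact (V3_pos hy0 (hy.2.trans_lt h1)).le
      · filter_upwards [self_mem_nhdsWithin, hlt] with y hy hy2
        rcases hy.1.eq_or_lt with rfl | hy0
        · rw [V3_zero]; simp
        · exact V3_le hy0 hy2.le
    · exact (V3_deriv hpos (hx.2.trans_lt h1)).continuousAt.continuousWithinAt
  have hd : ∀ x ∈ Set.Ioo 0 q, HasDerivAt V3 (U3 x) x := fun x hx => V3_deriv hx.1 (hx.2.trans h1)
  have hi : IntervalIntegrable U3 MeasureTheory.volume 0 q := by
    rw [intervalIntegrable_iff_integrableOn_Ioc_of_le h0.le]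
    refine intervalIntegral.integrableOn_deriv_of_nonneg hc hd fun x hx => ?_
    have hx1 := hx.2.trans h1
    rw [U3_eq hx.1 hx1]
    have p1 := EE_pos hx.1 hx1
    have p3 := EEd_pos hx.1 hx1 3 (by norm_num)
    have p6 := EEd_pos hx.1 hx1 6 (by norm_num)
    positivity
  rw [intervalIntegral.integral_eq_sub_of_hasDerivAt_of_le h0.le hc hd hi, V3_zero, sub_zero]

lemma V3_gg {s : ℝ} (hs : 0 < s) :
    V3 (Real.exp (-(2 * π * s))) = gg s ^ 3 * gg (6 * s) ^ 9 / (gg (2 * s) ^ 3 * gg (3 * s) ^ 9) ∧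
    1 + V3 (Real.exp (-(2 * π * s))) = gg (2 * s) ^ 5 * gg (6 * s) / (gg s * gg (3 * s) ^ 5) ∧
    1 - 8 * V3 (Real.exp (-(2 * π * s))) = gg s ^ 8 * gg (6 * s) ^ 4 / (gg (2 * s) ^ 4 * gg (3 * s) ^ 8) := by
  have A := relAg hs
  have B := relBg hs
  have g1 := gg_pos hs
  have g2 := gg_pos (show 0 < 2 * s by positivity)
  have g3 := gg_pos (show 0 < 3 * s by positivity)
  have g6 := gg_pos (show 0 < 6 * s by positivity)
  have E : V3 (Real.exp (-(2 * π * s))) = gg s ^ 3 * gg (6 * s) ^ 9 / (gg (2 * s) ^ 3 * gg (3 * s) ^ 9) := by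
    rw [V3_eq (Real.exp_pos _) (exp_lt1 hs)]
    obtain ⟨g1, g2, g3, g6⟩ := gg_all s
    rw [g1, g2, g3, g6]
    have h24 := exp24 s
    have p1 := EE_pos (Real.exp_pos _) (exp_lt1 hs)
    have p2 := EEd_pos (Real.exp_pos _) (exp_lt1 hs) 2 (by norm_num)
    have p3 := EEd_pos (Real.exp_pos _) (exp_lt1 hs) 3 (by norm_num)
    have hc := Real.exp_pos (-(π * s / 12))
    generalize EE (Real.exp (-(2 * π * s))) = x1 at *
    generalize EE (Real.exp (-(2 * π * s)) ^ 2) = x2 at *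
    generalize EE (Real.exp (-(2 * π * s)) ^ 3) = x3 at *
    generalize EE (Real.exp (-(2 * π * s)) ^ 6) = x6 at *
    generalize Real.exp (-(π * s / 12)) = c at *
    rw [h24]
    field_simp
  have E2 : 1 + V3 (Real.exp (-(2 * π * s))) = gg (2 * s) ^ 5 * gg (6 * s) / (gg s * gg (3 * s) ^ 5) := by
    rw [E]
    generalize gg s = y1 at *
    generalize gg (2 * s) = y2 at *
    generalize gg (3 * s) = y3 at *
    generalize gg (6 * s) = y6 at *
    field_simp
    linear_combination B
  refine ⟨E, E2, ?_⟩
  have : 1 - 8 * V3 (Real.exp (-(2 * π * s))) = 9 - 8 * (1 + V3 (Real.exp (-(2 * π * s)))) := by ring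
  rw [this, E2]
  generalize gg s = y1 at *
  generalize gg (2 * s) = y2 at *
  generalize gg (3 * s) = y3 at *
  generalize gg (6 * s) = y6 at *
  field_simp
  linear_combination -A

lemma val6 : V3 (Real.exp (-2 * Real.pi / Real.sqrt 6)) = (3 * Real.sqrt 2 - 4) / 4 := by
  have hw : 0 < Real.sqrt 6 := by positivity
  have hw2 : Real.sqrt 6 ^ 2 = 6 := Real.sq_sqrt (by norm_num)
  set s : ℝ := 1 / Real.sqrt 6 with hsd
  have hs : 0 < s := by positivity
  have hss : 6 * s * s = 1 := by rw [hsd]; field_simp; linarith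
  have ha : -2 * Real.pi / Real.sqrt 6 = -(2 * π * s) := by rw [hsd]; ring
  rw [ha]
  obtain ⟨e1, e2, e3⟩ := V3_gg hs
  have px := V3_pos (Real.exp_pos _) (exp_lt1 hs)
  set x := V3 (Real.exp (-(2 * π * s)))
  have t1 : gg s = Real.sqrt (6 * s) * gg (6 * s) := by
    rw [← gg_inv (by positivity)]; congr 1; field_simp; linarith
  have t2 : gg (2 * s) = Real.sqrt (3 * s) * gg (3 * s) := by
    rw [← gg_inv (by positivity)]; congr 1; field_simp; linarith
  have g1 := gg_pos hs
  have g2 := gg_pos (show 0 < 2 * s by positivity)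
  have g3 := gg_pos (show 0 < 3 * s by positivity)
  have g6 := gg_pos (show 0 < 6 * s by positivity)
  have k1 : gg s ^ 2 = 6 * s * gg (6 * s) ^ 2 := by rw [t1, mul_pow, Real.sq_sqrt (by positivity)]
  have k2 : gg (2 * s) ^ 2 = 3 * s * gg (3 * s) ^ 2 := by rw [t2, mul_pow, Real.sq_sqrt (by positivity)]
  have k : gg s ^ 2 * gg (3 * s) ^ 2 = 2 * (gg (2 * s) ^ 2 * gg (6 * s) ^ 2) := by
    rw [k1, k2]; ring
  have k3 : gg s ^ 6 * gg (3 * s) ^ 6 = 8 * (gg (2 * s) ^ 6 * gg (6 * s) ^ 6) := by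
    calc _ = (gg s ^ 2 * gg (3 * s) ^ 2) ^ 3 := by ring
      _ = _ := by rw [k]; ring
  have m : x * (1 + x) * (gg s ^ 6 * gg (3 * s) ^ 6) = (1 - 8 * x) * (gg (2 * s) ^ 6 * gg (6 * s) ^ 6) := by
    rw [e2, e3, e1]
    field_simp
  have m2 : 8 * (x * (1 + x)) = 1 - 8 * x := by
    rw [k3] at m
    have hpp : 0 < gg (2 * s) ^ 6 * gg (6 * s) ^ 6 := by positivity
    exact mul_right_cancel₀ hpp.ne' (by linear_combination m)
  have r2 : Real.sqrt 2 ^ 2 = 2 := Real.sq_sqrt (by norm_num)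
  have rp : 0 < Real.sqrt 2 := by positivity
  have f : (x + 1 - 3 * Real.sqrt 2 / 4) * (x + 1 + 3 * Real.sqrt 2 / 4) = 0 := by
    linear_combination m2 / 8 - 9 / 16 * r2
  rcases mul_eq_zero.1 f with h | h <;> linarith

lemma val3 : V3 (Real.exp (-2 * Real.pi / Real.sqrt 3)) = (Real.sqrt 3 - 1) ^ 3 / 16 := by
  have hw : 0 < Real.sqrt 3 := by positivity
  have hw2 : Real.sqrt 3 ^ 2 = 3 := Real.sq_sqrt (by norm_num)
  set s : ℝ := 1 / Real.sqrt 3 with hsd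
  have hs : 0 < s := by positivity
  have hss : 3 * s * s = 1 := by rw [hsd]; field_simp; linarith
  have ha : -2 * Real.pi / Real.sqrt 3 = -(2 * π * s) := by rw [hsd]; ring
  rw [ha]
  obtain ⟨e1, e2, e3⟩ := V3_gg hs
  have px := V3_pos (Real.exp_pos _) (exp_lt1 hs)
  set x := V3 (Real.exp (-(2 * π * s)))
  have t1 : gg s = Real.sqrt (3 * s) * gg (3 * s) := by
    rw [← gg_inv (by positivity)]; congr 1; field_simp; linarith
  have g1 := gg_pos hs
  have g2 := gg_pos (show 0 < 2 * s by positivity)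
  have g3 := gg_pos (show 0 < 3 * s by positivity)
  have g6 := gg_pos (show 0 < 6 * s by positivity)
  have k1 : gg s ^ 2 = 3 * s * gg (3 * s) ^ 2 := by rw [t1, mul_pow, Real.sq_sqrt (by positivity)]
  have k3 : gg s ^ 12 = 27 * gg (3 * s) ^ 12 := by
    calc _ = (gg s ^ 2) ^ 6 := by ring
      _ = 27 * (3 * s * s) ^ 3 * gg (3 * s) ^ 12 := by rw [k1]; ring
      _ = _ := by rw [hss]; ring
  have m : x * gg s ^ 12 = (1 - 8 * x) ^ 2 * (1 + x) * gg (3 * s) ^ 12 := by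
    rw [e2, e3, e1]
    field_simp
  have m2 : 27 * x = (1 - 8 * x) ^ 2 * (1 + x) := by
    rw [k3] at m
    have hpp : 0 < gg (3 * s) ^ 12 := by positivity
    exact mul_right_cancel₀ hpp.ne' (by linear_combination m)
  have lt : 0 < 1 - 8 * x := by rw [e3]; positivity
  have f : (x + 5 / 8 - 3 * Real.sqrt 3 / 8) * (x + 5 / 8 + 3 * Real.sqrt 3 / 8) * (2 * x - 1) = 0 := by
    linear_combination -m2 / 32 - 9 / 64 * (2 * x - 1) * hw2
  have hv : (Real.sqrt 3 - 1) ^ 3 / 16 = (3 * Real.sqrt 3 - 5) / 8 := by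
    linear_combination (Real.sqrt 3 - 3) / 16 * hw2
  rw [hv]
  rcases mul_eq_zero.1 f with h | h
  · rcases mul_eq_zero.1 h with h | h <;> linarith
  · linarith

lemma val2 : V3 (Real.exp (-2 * Real.pi / Real.sqrt 2)) = (Real.sqrt 6 - 2) ^ 3 / 8 := by
  have hw : 0 < Real.sqrt 2 := by positivity
  have hw2 : Real.sqrt 2 ^ 2 = 2 := Real.sq_sqrt (by norm_num)
  set s : ℝ := 1 / Real.sqrt 2 with hsd
  have hs : 0 < s := by positivity
  have hss : 2 * s * s = 1 := by rw [hsd]; field_simp; linarith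
  have ha : -2 * Real.pi / Real.sqrt 2 = -(2 * π * s) := by rw [hsd]; ring
  rw [ha]
  obtain ⟨e1, e2, e3⟩ := V3_gg hs
  have px := V3_pos (Real.exp_pos _) (exp_lt1 hs)
  set x := V3 (Real.exp (-(2 * π * s)))
  have t1 : gg s = Real.sqrt (2 * s) * gg (2 * s) := by
    rw [← gg_inv (by positivity)]; congr 1; field_simp; linarith
  have g1 := gg_pos hs
  have g2 := gg_pos (show 0 < 2 * s by positivity)
  have g3 := gg_pos (show 0 < 3 * s by positivity)
  have g6 := gg_pos (show 0 < 6 * s by positivity)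
  have k1 : gg s ^ 2 = 2 * s * gg (2 * s) ^ 2 := by rw [t1, mul_pow, Real.sq_sqrt (by positivity)]
  have k3 : gg s ^ 24 = 64 * gg (2 * s) ^ 24 := by
    calc _ = (gg s ^ 2) ^ 12 := by ring
      _ = 64 * (2 * s * s) ^ 6 * gg (2 * s) ^ 24 := by rw [k1]; ring
      _ = _ := by rw [hss]; ring
  have m : x * (1 + x) ^ 3 * gg s ^ 24 = (1 - 8 * x) ^ 3 * gg (2 * s) ^ 24 := by
    rw [e2, e3, e1]
    field_simp
  have m2 : 64 * (x * (1 + x) ^ 3) = (1 - 8 * x) ^ 3 := by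
    rw [k3] at m
    have hpp : 0 < gg (2 * s) ^ 24 := by positivity
    exact mul_right_cancel₀ hpp.ne' (by linear_combination m)
  have r2 : Real.sqrt 6 ^ 2 = 6 := Real.sq_sqrt (by norm_num)
  have rp : 0 < Real.sqrt 6 := by positivity
  have f : (x + 22 / 4 - 9 * Real.sqrt 6 / 4) * (x + 22 / 4 + 9 * Real.sqrt 6 / 4) * (8 * x ^ 2 + 1) = 0 := by
    linear_combination m2 / 8 - 81 / 16 * (8 * x ^ 2 + 1) * r2
  have hv : (Real.sqrt 6 - 2) ^ 3 / 8 = (9 * Real.sqrt 6 - 22) / 4 := by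
    linear_combination (Real.sqrt 6 - 6) / 8 * r2
  rw [hv]
  rcases mul_eq_zero.1 f with h | h
  · rcases mul_eq_zero.1 h with h | h <;> linarith
  · nlinarith [sq_nonneg x]

theorem stmt_3 :
    (∀ q : ℝ, 0 < q → q < 1 → (∫ t in (0:ℝ)..q, U3 t) = V3 q) ∧
    V3 (Real.exp (-2 * Real.pi / Real.sqrt 6)) = (3 * Real.sqrt 2 - 4) / 4 ∧
    V3 (Real.exp (-2 * Real.pi / Real.sqrt 3)) = (Real.sqrt 3 - 1) ^ 3 / 16 ∧
    V3 (Real.exp (-2 * Real.pi / Real.sqrt 2)) = (Real.sqrt 6 - 2) ^ 3 / 8 := by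
  exact ⟨fun q h0 h1 => V3_int h0 h1, val6, val3, val2⟩
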